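/- arXiv:1102.1105 — 5 statements merged into one kernel-verified Lean document; each statement's English description precedes it below -/
import Mathlib

section
/- Let R be an associative unital ring and let α₁,…,α_k, β₁,…,β_k ∈ R be an odd family, i.e. x·y = −y·x for every two members x, y of the list α₁,…,α_k, β₁,…,β_k and t·t = 0 for every member t. Let A be the k×k matrix over R with entries A_{ij} = α_i·β_j and set a = α₁·β₁ + ⋯ + α_k·β_k. Then: (i) any two entries of A commute with each other, and a commutes with every entry of A; (ii) A·A = −a•A, where a•A denotes the matrix with entries a·A_{ij}; (iii) a^{k+1} = 0. -/
theorem odd_family_sum_pow_aux {R ι : Type*} [Ring R] (f : ι → R)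
    (hc : ∀ i j, Commute (f i) (f j)) (hf : ∀ i, f i ^ 2 = 0) (s : Finset ι) :
    (∑ i ∈ s, f i) ^ (s.card + 1) = 0 := by
  classical
  induction s using Finset.induction_on with
  | empty => simp
  | insert i s hi ih =>
    rw [Finset.sum_insert hi, Finset.card_insert_of_notMem hi]
    exact (Commute.sum_right s f (f i) (fun j _ => hc i j)).add_pow_eq_zero_of_add_le_succ_of_pow_eq_zero
      (hf i) ih (by omega)

/-- Lemma 3.1 of the paper, setup part.
If `α₁,…,α_k, β₁,…,β_k` form an odd family in an associative unital ring `R`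
(any two members anticommute and each member squares to zero), `A` is the
`k × k` matrix with entries `A i j = α i * β j` and `a = ∑ i, α i * β i`, then:
(i) any two entries of `A` commute and `a` commutes with every entry of `A`;
(ii) `A * A = -(a • A)`; (iii) `a ^ (k+1) = 0`. -/
theorem bott_chern_odd_family_matrix
    {R : Type*} [Ring R] (k : ℕ) (α β : Fin k → R)
    (hodd : ∀ x ∈ Set.range α ∪ Set.range β, ∀ y ∈ Set.range α ∪ Set.range β,
      x * y = -(y * x))
    (hsq : ∀ x ∈ Set.range α ∪ Set.range β, x * x = 0)
    (A : Matrix (Fin k) (Fin k) R) (hA : ∀ i j, A i j = α i * β j)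
    (a : R) (ha : a = ∑ i, α i * β i) :
    (∀ i j i' j', Commute (A i j) (A i' j')) ∧
    (∀ i j, Commute a (A i j)) ∧
    A * A = -(a • A) ∧
    a ^ (k + 1) = 0 := by
  have hcomm : ∀ x ∈ Set.range α ∪ Set.range β, ∀ y ∈ Set.range α ∪ Set.range β,
      ∀ z ∈ Set.range α ∪ Set.range β, Commute (x * y) z := by
    intro x hx y hy z hz
    show x * y * z = z * (x * y)
    rw [mul_assoc, hodd y hy z hz, mul_neg, ← mul_assoc, hodd x hx z hz, neg_mul, neg_neg,
      mul_assoc]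
  have mα : ∀ i, α i ∈ Set.range α ∪ Set.range β := fun i => Or.inl ⟨i, rfl⟩
  have mβ : ∀ i, β i ∈ Set.range α ∪ Set.range β := fun i => Or.inr ⟨i, rfl⟩
  have h1 : ∀ i j i' j', Commute (α i * β j) (α i' * β j') := fun i j i' j' =>
    (hcomm _ (mα i) _ (mβ j) _ (mα i')).mul_right (hcomm _ (mα i) _ (mβ j) _ (mβ j'))
  refine ⟨?_, ?_, ?_, ?_⟩
  · intro i j i' j'
    rw [hA, hA]
    exact h1 i j i' j'
  · intro i j
    rw [hA, ha]
    exact Commute.sum_left _ _ _ (fun l _ => h1 l l i j)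
  · ext i j
    rw [Matrix.mul_apply, Matrix.neg_apply, Matrix.smul_apply, smul_eq_mul, hA, ha,
      Finset.sum_mul, ← Finset.sum_neg_distrib]
    refine Finset.sum_congr rfl fun l _ => ?_
    rw [hA, hA, ← mul_assoc (α l * β l), (hcomm _ (mα l) _ (mβ l) _ (mα i)).eq,
      hodd _ (mα l) _ (mβ l)]
    noncomm_ring
  · have := odd_family_sum_pow_aux (fun i => α i * β i) (fun i j => h1 i i j j) (fun i => by
      show (α i * β i) ^ 2 = 0
      rw [pow_two, ← mul_assoc, (hcomm _ (mα i) _ (mβ i) _ (mα i)).eq, ← mul_assoc,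
        hsq _ (mα i), zero_mul, zero_mul]) Finset.univ
    rw [ha]
    simpa using this
end

section
/- Let R be a commutative ring, k ≥ 1, let A be a k×k matrix over R, let a = trace(A), and assume A·A = −a•A and a^{k+1} = 0. Then for every λ ∈ R the matrix 1 − λ•A is invertible, with inverse 1 + c•A where c = Σ_{j=0}^{k} (−1)^j λ^{j+1} a^j; that is, (1 − λ•A)·(1 + c•A) = 1 = (1 + c•A)·(1 − λ•A). -/
/-- Lemma 3.1 of the paper, inverse formula.
Over a commutative ring `R`, if `A` is a `k × k` matrix (`k ≥ 1`) with
`a = trace A`, `A * A = -(a • A)` and `a ^ (k+1) = 0`, then for every `λ ∈ R`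
the matrix `1 - λ • A` is invertible with inverse
`1 + (∑_{j=0}^{k} (-1)^j λ^{j+1} a^j) • A`. -/
theorem bott_chern_inverse_formula
    {R : Type*} [CommRing R] (k : ℕ) (hk : 1 ≤ k)
    (A : Matrix (Fin k) (Fin k) R)
    (h1 : A * A = -(A.trace • A)) (h2 : A.trace ^ (k + 1) = 0) (lam : R) :
    (1 - lam • A) *
        (1 + (∑ j ∈ Finset.range (k + 1), (-1 : R) ^ j * lam ^ (j + 1) * A.trace ^ j) • A)
      = 1 ∧
    (1 + (∑ j ∈ Finset.range (k + 1), (-1 : R) ^ j * lam ^ (j + 1) * A.trace ^ j) • A) *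
        (1 - lam • A)
      = 1 := by
  have key : ∀ n : ℕ, (∑ j ∈ Finset.range n, (-1 : R) ^ j * lam ^ (j + 1) * A.trace ^ j)
      * (1 + lam * A.trace) = lam - (-1) ^ n * lam ^ (n + 1) * A.trace ^ n := by
    intro n
    induction n with
    | zero => simp
    | succ n ih =>
      rw [Finset.sum_range_succ, add_mul, ih]
      ring
  have hc := key (k + 1)
  rw [h2, mul_zero, sub_zero] at hc
  generalize (∑ j ∈ Finset.range (k + 1), (-1 : R) ^ j * lam ^ (j + 1) * A.trace ^ j) = c at hc
  have hz : (c - lam + lam * c * A.trace) • A = 0 := by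
    have : c - lam + lam * c * A.trace = 0 := by linear_combination hc
    rw [this, zero_smul]
  constructor
  · have : (1 - lam • A) * (1 + c • A) = 1 + (c - lam + lam * c * A.trace) • A := by
      simp only [sub_mul, mul_add, one_mul, mul_one, smul_mul_assoc, mul_smul_comm, h1]
      module
    rw [this, hz, add_zero]
  · have : (1 + c • A) * (1 - lam • A) = 1 + (c - lam + lam * c * A.trace) • A := by
      simp only [mul_sub, add_mul, one_mul, mul_one, smul_mul_assoc, mul_smul_comm, h1]
      module
    rw [this, hz, add_zero]
end

section
/- Let R be a commutative ring which is a ℚ-algebra, k ≥ 1, let A be a k×k matrix over R, let a = trace(A), and assume A·A = −a•A and a^{k+1} = 0. Then for every λ ∈ R, det(1 − λ•A) = Σ_{j=0}^{k} (−1)^j λ^j a^j; equivalently, det(1 − λ•A)·(1 + λ·a) = 1. -/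
open Polynomial in
lemma bc_aeval_rev {R S : Type*} [CommRing R] [CommRing S] [Algebra R S] {k : ℕ}
    (A : Matrix (Fin k) (Fin k) R) (s : S) :
    aeval s A.charpolyRev = (1 - s • A.map (algebraMap R S)).det := by
  rw [Matrix.charpolyRev, AlgHom.map_det]
  congr 1
  ext i j
  simp [Matrix.one_apply, apply_ite]
  exact mul_comm _ _

open Polynomial in
lemma bc_mul {R S : Type*} [CommRing R] [CommRing S] [Algebra R S] {k : ℕ}
    (A : Matrix (Fin k) (Fin k) R) (h1 : A * A = -(A.trace • A)) (s t : S) :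
    aeval s A.charpolyRev * aeval t A.charpolyRev =
      aeval (s + t * (1 + algebraMap R S A.trace * s)) A.charpolyRev := by
  simp only [bc_aeval_rev, ← Matrix.det_mul]
  congr 1
  have h : A.map (algebraMap R S) * A.map (algebraMap R S) =
      -(algebraMap R S A.trace • A.map (algebraMap R S)) := by
    rw [← Matrix.map_mul, h1]
    ext i j
    simp
    rw [Algebra.smul_def]
  simp only [sub_mul, mul_sub, one_mul, mul_one, smul_mul_assoc, mul_smul_comm, h]
  module

open Polynomial in
lemma bc_ode {R : Type*} [CommRing R] {k : ℕ}
    (A : Matrix (Fin k) (Fin k) R) (h1 : A * A = -(A.trace • A)) :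
    (1 + C A.trace * X) * derivative A.charpolyRev = - C A.trace * A.charpolyRev := by
  have h := bc_mul (S := DualNumber R[X]) A h1 (algebraMap R[X] _ X) DualNumber.eps
  have e2 : (DualNumber.eps * (1 + algebraMap R (DualNumber R[X]) A.trace *
      algebraMap R[X] _ X)) ^ 2 = 0 := by
    rw [mul_pow, sq, DualNumber.eps_mul_eps, zero_mul]
  have e1 : (DualNumber.eps : DualNumber R[X]) ^ 2 = 0 := by
    rw [sq, DualNumber.eps_mul_eps]
  have h3 := aeval_add_of_sq_eq_zero A.charpolyRev (0 : DualNumber R[X]) DualNumber.eps e1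
  rw [zero_add] at h3
  rw [aeval_add_of_sq_eq_zero _ _ _ e2, h3] at h
  have c0 : ∀ p : R[X], aeval (0 : DualNumber R[X]) p = algebraMap R _ (p.coeff 0) := by
    intro p
    rw [← coeff_zero_eq_aeval_zero']
  have c1 : ∀ p : R[X], aeval (algebraMap R[X] (DualNumber R[X]) X) p = algebraMap R[X] _ p := by
    intro p
    rw [aeval_algebraMap_apply]; simp
  simp only [c0, c1, coeff_derivative] at h
  have h4 := congrArg TrivSqZeroExt.snd h
  have h0 : A.charpolyRev.coeff 0 = 1 := by
    rw [coeff_zero_eq_eval_zero, Matrix.eval_charpolyRev]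
  simp [IsScalarTower.algebraMap_apply R R[X] (DualNumber R[X]), h0,
    TrivSqZeroExt.algebraMap_eq_inl] at h4
  linear_combination -h4

open Polynomial in
lemma bc_poly {R : Type*} [CommRing R] [Algebra ℚ R] {k : ℕ}
    (A : Matrix (Fin k) (Fin k) R) (h1 : A * A = -(A.trace • A)) :
    A.charpolyRev * (1 + C A.trace * X) = 1 := by
  have hd : derivative (A.charpolyRev * (1 + C A.trace * X)) = 0 := by
    have := bc_ode A h1
    simp only [derivative_mul, derivative_add, derivative_one, derivative_C, derivative_X]
    linear_combination this
  have : IsAddTorsionFree R := IsAddTorsionFree.of_module_rat R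
  have hn := derivative_eq_zero.1 hd
  rw [eq_C_of_natDegree_eq_zero hn, coeff_zero_eq_eval_zero]
  simp

/-- Lemma 3.1 of the paper, determinant formula.
Over a commutative `ℚ`-algebra `R`, if `A` is a `k × k` matrix (`k ≥ 1`) with
`a = trace A`, `A * A = -(a • A)` and `a ^ (k+1) = 0`, then for every `λ ∈ R`,
`det (1 - λ • A) = ∑_{j=0}^{k} (-1)^j λ^j a^j`; equivalently
`det (1 - λ • A) * (1 + λ a) = 1`. -/
theorem bott_chern_det_formula
    {R : Type*} [CommRing R] [Algebra ℚ R] (k : ℕ) (hk : 1 ≤ k)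
    (A : Matrix (Fin k) (Fin k) R)
    (h1 : A * A = -(A.trace • A)) (h2 : A.trace ^ (k + 1) = 0) (lam : R) :
    (1 - lam • A).det = ∑ j ∈ Finset.range (k + 1), (-1 : R) ^ j * lam ^ j * A.trace ^ j ∧
    (1 - lam • A).det * (1 + lam * A.trace) = 1 := by
  have hD : (1 - lam • A).det * (1 + lam * A.trace) = 1 := by
    have h := congrArg (Polynomial.aeval lam) (bc_poly A h1)
    rw [map_mul, bc_aeval_rev] at h
    have e : A.map (algebraMap R R) = A := by ext i j; simp
    rw [e] at h
    rw [map_add, map_mul, map_one, Polynomial.aeval_C, Polynomial.aeval_X,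
      Algebra.algebraMap_self_apply] at h
    rw [mul_comm lam, h]
  refine ⟨?_, hD⟩
  have hs : (∑ j ∈ Finset.range (k + 1), (-1 : R) ^ j * lam ^ j * A.trace ^ j) *
      (1 + lam * A.trace) = 1 := by
    have g := geom_sum_mul (-1 * lam * A.trace) (k + 1)
    rw [mul_pow _ A.trace (k + 1), h2] at g
    have e : ∀ j, (-1 * lam * A.trace) ^ j = (-1 : R) ^ j * lam ^ j * A.trace ^ j := by
      intro j
      rw [mul_pow, mul_pow]
    rw [Finset.sum_congr rfl (fun j _ => e j)] at g
    linear_combination -g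
  calc (1 - lam • A).det = (1 - lam • A).det * ((∑ j ∈ Finset.range (k + 1),
        (-1 : R) ^ j * lam ^ j * A.trace ^ j) * (1 + lam * A.trace)) := by rw [hs, mul_one]
    _ = _ := by rw [mul_left_comm, hD, mul_one]
end

section
/- In the graded setting described in the context, let r ≥ 2, let E ∈ A₀ be invertible, let f₁,…,f_{r−1}, p₁,…,p_{r−1} ∈ A₀, let h be the r×r matrix over A₀ with h_{ij} = δ_{ij} for i,j ≤ r−1, h_{i,r} = p_i and h_{r,i} = f_i for i ≤ r−1, and h_{r,r} = Σ_{k=1}^{r−1} f_k·p_k + E (so that det h = E and h is invertible), and set Θ = ∂̄(h^{−1}·∂h) (an r×r matrix with entries in A₂) and U = E^{−1}·Σ_{i=1}^{r−1} ∂f_i·∂̄p_i ∈ A₂ (so that U^r = 0). Then for every λ ∈ ℚ: det(1 + λ·Θ) = 1 + λ·∂̄(E^{−1}·∂E) − λ²·∂̄(∂U)·Σ_{k=0}^{r−1} λ^k U^k − λ³·(∂̄U)·(∂U)·Σ_{k=0}^{r−1} (k+1)·λ^k U^k. Equivalently, writing c_k for the coefficient of λ^k in det(1 + λ·Θ): c₁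 = ∂̄(E^{−1}·∂E) and c_k = −(1/(k−1))·∂̄(∂(U^{k−1})) for 2 ≤ k ≤ r. -/
/-- The determinant of a square matrix over a (possibly noncommutative) ring,
defined by the Leibniz formula with the entries multiplied in the row order
`0, 1, …, m-1` (the statement applies it to matrices whose entries pairwise
commute, so the order is immaterial there). -/
def ndet {A : Type*} [Ring A] {m : ℕ} (M : Matrix (Fin m) (Fin m) A) : A :=
  ∑ σ : Equiv.Perm (Fin m),
    ((Equiv.Perm.sign σ : ℤ)) • ((List.finRange m).map fun i => M (σ i) i).prod

/-- The `(m+1) × (m+1)` matrix of Lemma 3.2 of the paper: identity in the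
upper-left `m × m` block, last column `p`, last row `f`, and lower-right
corner `∑ k, f k * p k + E`. -/
def hMat {A : Type*} [Ring A] (E : A) {m : ℕ} (f p : Fin m → A) :
    Matrix (Fin (m + 1)) (Fin (m + 1)) A :=
  Matrix.of fun i j =>
    if hi : (i : ℕ) < m then
      if _hj : (j : ℕ) < m then (if (i : ℕ) = (j : ℕ) then 1 else 0)
      else p ⟨i, hi⟩
    else
      if hj : (j : ℕ) < m then f ⟨j, hj⟩
      else (∑ k, f k * p k) + E

section BCHelpers

theorem bc_ndet_coe {A : Type*} [Ring A] {m : ℕ}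
    (M : Matrix (Fin m) (Fin m) (Subring.center A)) :
    ndet (M.map (fun x => (x : A))) = (M.det : A) := by
  unfold ndet
  rw [Matrix.det_apply]
  have : ∀ x : Subring.center A, (x : A) = (Subring.center A).subtype x := fun _ => rfl
  rw [this, map_sum]
  refine Finset.sum_congr rfl fun σ _ => ?_
  rw [Units.smul_def, map_zsmul, Fin.prod_univ_def, map_list_prod, List.map_map]
  rfl

theorem bc_lift {A : Type*} [Ring A] {m k : ℕ} (M : Matrix (Fin m) (Fin k) A)
    (hM : ∀ i j, M i j ∈ Subring.center A) :
    ∃ M' : Matrix (Fin m) (Fin k) (Subring.center A), M'.map (fun x => (x : A)) = M :=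
  ⟨Matrix.of fun i j => ⟨M i j, hM i j⟩, rfl⟩

theorem bc_map_inj {A : Type*} [Ring A] {m k : ℕ}
    {M N : Matrix (Fin m) (Fin k) (Subring.center A)}
    (h : M.map (fun x => (x : A)) = N.map (fun x => (x : A))) : M = N := by
  ext i j
  exact congrFun (congrFun h i) j

theorem bc_map_mul {A : Type*} [Ring A] {m : ℕ}
    (M N : Matrix (Fin m) (Fin m) (Subring.center A)) :
    (M * N).map (fun x => (x : A)) = M.map (fun x => (x : A)) * N.map (fun x => (x : A)) :=
  Matrix.map_mul (f := (Subring.center A).subtype)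

theorem bc_map_one {A : Type*} [Ring A] {m : ℕ} :
    (1 : Matrix (Fin m) (Fin m) (Subring.center A)).map (fun x => (x : A)) = 1 :=
  Matrix.map_one (fun x : Subring.center A => (x : A)) rfl rfl

theorem bc_schur_comm {B : Type*} [CommRing B] {n : ℕ}
    (M : Matrix (Fin (n + 1)) (Fin (n + 1)) B) (W : Matrix (Fin n) (Fin n) B)
    (hW : M.submatrix Fin.castSucc Fin.castSucc * W = 1) :
    M.det = (M.submatrix Fin.castSucc Fin.castSucc).det *
      (M (Fin.last n) (Fin.last n)
        - ∑ i, ∑ j, M (Fin.last n) (Fin.castSucc i) * W i j * M (Fin.castSucc j) (Fin.last n)) := by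
  have hb : M.submatrix (finSumFinEquiv (m := n) (n := 1)) (finSumFinEquiv (m := n) (n := 1)) =
      Matrix.fromBlocks (M.submatrix Fin.castSucc Fin.castSucc)
        (Matrix.of fun i _ => M (Fin.castSucc i) (Fin.last n))
        (Matrix.of fun _ j => M (Fin.last n) (Fin.castSucc j))
        (Matrix.of fun _ _ => M (Fin.last n) (Fin.last n)) := by
    have hl : ∀ x : Fin 1, Fin.natAdd n x = Fin.last n := by
      intro x; ext; simp
    ext (i | i) (j | j) <;> simp [hl] <;> rfl
  let inst : Invertible (M.submatrix Fin.castSucc Fin.castSucc) :=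
    ⟨W, mul_eq_one_comm.mp hW, hW⟩
  rw [← Matrix.det_submatrix_equiv_self (finSumFinEquiv (m := n) (n := 1)) M, hb,
    Matrix.det_fromBlocks₁₁]
  congr 1
  rw [Matrix.det_unique]
  simp only [Matrix.sub_apply, Matrix.mul_apply, Matrix.of_apply]
  congr 1
  simp only [Finset.sum_mul]
  rw [Finset.sum_comm]
  rfl

theorem bc_schur {A : Type*} [Ring A] {n : ℕ}
    (M : Matrix (Fin (n + 1)) (Fin (n + 1)) A) (hM : ∀ i j, M i j ∈ Subring.center A)
    (W : Matrix (Fin n) (Fin n) A) (hWc : ∀ i j, W i j ∈ Subring.center A)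
    (hW : M.submatrix Fin.castSucc Fin.castSucc * W = 1) :
    ndet M = ndet (M.submatrix Fin.castSucc Fin.castSucc) *
      (M (Fin.last n) (Fin.last n)
        - ∑ i, ∑ j, M (Fin.last n) (Fin.castSucc i) * W i j * M (Fin.castSucc j) (Fin.last n)) := by
  obtain ⟨M, rfl⟩ := bc_lift M hM
  obtain ⟨W, rfl⟩ := bc_lift W hWc
  have h1 : (M.map (fun x => (x : A))).submatrix (Fin.castSucc : Fin n → Fin (n+1)) Fin.castSucc
    = (M.submatrix Fin.castSucc Fin.castSucc).map (fun x => (x : A)) := rfl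
  rw [h1, ← bc_map_mul, ← bc_map_one] at hW
  rw [h1, bc_ndet_coe, bc_ndet_coe, bc_schur_comm M W (bc_map_inj hW)]
  simp

theorem bc_conj {A : Type*} [Ring A] {m : ℕ}
    (P Q M N : Matrix (Fin m) (Fin m) A)
    (hP : ∀ i j, P i j ∈ Subring.center A) (hQ : ∀ i j, Q i j ∈ Subring.center A)
    (hM : ∀ i j, M i j ∈ Subring.center A) (hN : ∀ i j, N i j ∈ Subring.center A)
    (hPQ : P * Q = 1) (h : P * M = N * P) : ndet M = ndet N := by
  obtain ⟨M, rfl⟩ := bc_lift M hM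
  obtain ⟨N, rfl⟩ := bc_lift N hN
  obtain ⟨P, rfl⟩ := bc_lift P hP
  obtain ⟨Q, rfl⟩ := bc_lift Q hQ
  rw [← bc_map_mul, ← bc_map_one] at hPQ
  rw [← bc_map_mul, ← bc_map_mul] at h
  have hPQ := congrArg Matrix.det (bc_map_inj hPQ)
  have h := congrArg Matrix.det (bc_map_inj h)
  rw [Matrix.det_mul, Matrix.det_one] at hPQ
  rw [Matrix.det_mul, Matrix.det_mul] at h
  rw [bc_ndet_coe, bc_ndet_coe]
  congr 1
  calc M.det = (P.det * Q.det) * M.det := by rw [hPQ, one_mul]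
    _ = (P.det * M.det) * Q.det := by ring
    _ = N.det * (P.det * Q.det) := by rw [h]; ring
    _ = N.det := by rw [hPQ, mul_one]

/-- nilpotency of a sum of `n` products of odd elements -/
theorem bc_nilp {A : Type*} [Ring A] {n : ℕ} (a q : Fin n → A)
    (hc : ∀ i j, a i * q j ∈ Subring.center A)
    (hs : ∀ i, (a i * q i) * (a i * q i) = 0) :
    (∑ i, a i * q i) ^ (n + 1) = 0 := by
  induction n with
  | zero => simp
  | succ n ih =>
    rw [Fin.sum_univ_castSucc]
    refine Commute.add_pow_eq_zero_of_add_le_succ_of_pow_eq_zero (m := n + 1) (n := 2) ?_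
      (ih (fun i => a i.castSucc) (fun i => q i.castSucc) (fun i j => hc _ _) (fun i => hs _)) ?_ ?_
    · exact Subring.mem_center_iff.mp (hc _ _) _
    · rw [pow_two, hs]
    · omega

theorem bc_WW {A : Type*} [Ring A] {n : ℕ} (a q : Fin n → A) (c : A)
    (hcc : c ∈ Subring.center A)
    (hu : c * (1 - ∑ i, a i * q i) = 1) :
    ((1 : Matrix (Fin n) (Fin n) A) - Matrix.of fun i j => q i * a j) *
      (1 + Matrix.of fun i j => c * (q i * a j)) = 1 := by
  have hcx := Subring.mem_center_iff.mp hcc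
  have key : (Matrix.of fun i j => q i * a j : Matrix (Fin n) (Fin n) A) *
      (Matrix.of fun i j => c * (q i * a j)) = (Matrix.of fun i j => c * (q i * a j))
       - (Matrix.of fun i j => q i * a j) := by
    ext i j
    simp only [Matrix.mul_apply, Matrix.of_apply, Matrix.sub_apply]
    have h2 : ∀ k, q i * a k * (c * (q k * a j)) = c * (q i * (a k * q k) * a j) := by
      intro k
      rw [← mul_assoc, hcx]; simp only [mul_assoc]
    simp only [h2]
    rw [← Finset.mul_sum, ← Finset.sum_mul, ← Finset.mul_sum]
    have h3 : c * (∑ i, a i * q i) = c - 1 := by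
      rw [mul_sub] at hu
      rw [mul_one] at hu
      rw [← hu]; abel
    rw [← mul_assoc, ← mul_assoc, ← hcx (q i), mul_assoc (q i), h3]
    rw [mul_sub, sub_mul, mul_one, hcx, mul_assoc]
  rw [sub_mul, one_mul, mul_add, mul_one, key]
  abel

theorem bc_sumW {A : Type*} [Ring A] {n : ℕ} (a q L R : Fin n → A) (c : A)
    (hcc : c ∈ Subring.center A) :
    ∑ i, ∑ j, L i * ((1 : Matrix (Fin n) (Fin n) A) + Matrix.of fun i j => c * (q i * a j)) i j * R j
      = ∑ i, L i * R i + c * ((∑ i, L i * q i) * ∑ j, a j * R j) := by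
  have hcx := Subring.mem_center_iff.mp hcc
  rw [Finset.sum_mul_sum, Finset.mul_sum, ← Finset.sum_add_distrib]
  refine Finset.sum_congr rfl fun i _ => ?_
  simp only [Matrix.add_apply, Matrix.of_apply, Matrix.one_apply, mul_add, add_mul,
    Finset.sum_add_distrib, mul_ite, ite_mul, mul_one, mul_zero, zero_mul,
    Finset.sum_ite_eq, Finset.mem_univ, if_true]
  congr 1
  rw [Finset.mul_sum]
  refine Finset.sum_congr rfl fun j _ => ?_
  rw [← mul_assoc (L i), hcx]
  simp only [mul_assoc]

theorem bc_odd_det {A : Type*} [Ring A] {n : ℕ} (a q : Fin n → A)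
    (hc : ∀ i j, a i * q j ∈ Subring.center A)
    (hs : ∀ i, (a i * q i) * (a i * q i) = 0)
    (hqa : ∀ i j, q i * a j = - (a j * q i)) :
    ∃ c ∈ Subring.center A, c * (1 - ∑ i, a i * q i) = 1 ∧
      ndet ((1 : Matrix (Fin n) (Fin n) A) - Matrix.of fun i j => q i * a j) = c := by
  induction n with
  | zero => exact ⟨1, one_mem _, by simp, by simp [ndet]⟩
  | succ n ih =>
    obtain ⟨c, hcc, hu, hd⟩ := ih (fun i => a i.castSucc) (fun i => q i.castSucc)
      (fun i j => hc _ _) (fun i => hs _) (fun i j => hqa _ _)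
    have hqc : ∀ i j, q i * a j ∈ Subring.center A := fun i j => by
      rw [hqa]; exact neg_mem (hc _ _)
    have hcx := Subring.mem_center_iff.mp hcc
    have hone : ∀ {m : ℕ} (i j : Fin m), (1 : Matrix (Fin m) (Fin m) A) i j ∈ Subring.center A := by
      intro m i j
      rw [Matrix.one_apply]; split_ifs
      · exact one_mem _
      · exact zero_mem _
    set s := a (Fin.last n) * q (Fin.last n) with hsdef
    set u := ∑ i : Fin n, a i.castSucc * q i.castSucc with hudef
    have hsc : ∀ x, x * s = s * x := Subring.mem_center_iff.mp (hc _ _)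
    have hss : s * s = 0 := hs _
    have hcu : c * u = c - 1 := by
      rw [mul_sub, mul_one] at hu
      rw [← hu]; abel
    refine ⟨c * (1 + c * s), mul_mem hcc (add_mem (one_mem _) (mul_mem hcc (hc _ _))), ?_, ?_⟩
    · rw [Fin.sum_univ_castSucc, ← hudef, ← hsdef]
      have h1 : c * (1 + c * s) = (1 + c * s) * c := (hcx _).symm
      rw [h1, mul_assoc, ← sub_sub, mul_sub, hu]
      have : c * s * (c * s) = 0 := by
        rw [mul_assoc, ← hsc (c * s), mul_assoc, hss]; simp
      rw [mul_sub, mul_one, add_mul, this]; simp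
    · rw [bc_schur (W := 1 + Matrix.of fun i j => c * (q i.castSucc * a j.castSucc))]
      · have hsub : ((1 : Matrix (Fin (n+1)) (Fin (n+1)) A) - Matrix.of fun i j => q i * a j).submatrix
            Fin.castSucc Fin.castSucc = ((1 : Matrix (Fin n) (Fin n) A)
              - Matrix.of fun i j => q i.castSucc * a j.castSucc) := by
          ext i j; simp [Matrix.one_apply]
        rw [hsub, hd]
        congr 1
        rw [bc_sumW _ _ _ _ _ hcc]
        simp only [Matrix.sub_apply, Matrix.of_apply, Matrix.one_apply_eq, Matrix.one_apply,
            (Fin.castSucc_lt_last _).ne, (Fin.castSucc_lt_last _).ne', if_false, zero_sub]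
        have e1 : ∑ i : Fin n, -(q (Fin.last n) * a i.castSucc) * -(q i.castSucc * a (Fin.last n))
            = q (Fin.last n) * u * a (Fin.last n) := by
          rw [hudef, Finset.mul_sum, Finset.sum_mul]
          exact Finset.sum_congr rfl fun i _ => by simp only [neg_mul_neg, mul_assoc]
        have e2 : ∑ i : Fin n, -(q (Fin.last n) * a i.castSucc) * q i.castSucc
            = - (q (Fin.last n) * u) := by
          rw [hudef, Finset.mul_sum, ← Finset.sum_neg_distrib]
          exact Finset.sum_congr rfl fun i _ => by simp only [neg_mul, mul_assoc]
        have e3 : ∑ i : Fin n, a i.castSucc * -(q i.castSucc * a (Fin.last n))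
            = - (u * a (Fin.last n)) := by
          rw [hudef, Finset.sum_mul, ← Finset.sum_neg_distrib]
          exact Finset.sum_congr rfl fun i _ => by simp only [mul_neg, mul_assoc]
        rw [e1, e2, e3]
        have e4 : c * (-(q (Fin.last n) * u) * -(u * a (Fin.last n)))
            = q (Fin.last n) * (c * u) * u * a (Fin.last n) := by
          rw [← mul_assoc (q _) c u, hcx]; simp only [neg_mul_neg, mul_assoc]
        rw [e4, hcu]
        have e5 : q (Fin.last n) * (c - 1) * u * a (Fin.last n)
            = q (Fin.last n) * (c * u) * a (Fin.last n) - q (Fin.last n) * u * a (Fin.last n) := by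
          noncomm_ring
        rw [e5, hcu]
        have e6 : q (Fin.last n) * (c - 1) * a (Fin.last n)
            = - (c * s) - q (Fin.last n) * a (Fin.last n) := by
          rw [mul_sub, hcx, sub_mul, mul_assoc, hqa, mul_one, hqa]; simp [hsdef]
        rw [e6]
        simp
      · intro i j
        exact sub_mem (hone _ _) (hqc _ _)
      · intro i j
        exact add_mem (hone _ _) (mul_mem hcc (hqc _ _))
      · have hsub : ((1 : Matrix (Fin (n+1)) (Fin (n+1)) A) - Matrix.of fun i j => q i * a j).submatrix
            Fin.castSucc Fin.castSucc = ((1 : Matrix (Fin n) (Fin n) A)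
              - Matrix.of fun i j => q i.castSucc * a j.castSucc) := by
          ext i j; simp [Matrix.one_apply]
        rw [hsub]
        exact bc_WW (fun i : Fin n => a i.castSucc) (fun i => q i.castSucc) c hcc hu

theorem bc_geom {A : Type*} [Ring A] [Algebra ℚ A] (u : A) (m : ℕ) :
    (1 - u) * ∑ k ∈ Finset.range m, ((k : ℚ) + 1) • u ^ k
      = ∑ k ∈ Finset.range m, u ^ k - (m : ℚ) • u ^ m := by
  induction m with
  | zero => simp
  | succ m ih =>
    rw [Finset.sum_range_succ, mul_add, ih, Finset.sum_range_succ, sub_mul, one_mul, mul_smul_comm,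
      ← pow_succ']
    push_cast
    module

theorem bc_hMat_cc {A : Type*} [Ring A] (E : A) {m : ℕ} (f p : Fin m → A) (i j : Fin m) :
    hMat E f p i.castSucc j.castSucc = if i = j then 1 else 0 := by
  simp [hMat, Fin.ext_iff]

theorem bc_hMat_cl {A : Type*} [Ring A] (E : A) {m : ℕ} (f p : Fin m → A) (i : Fin m) :
    hMat E f p i.castSucc (Fin.last m) = p i := by
  simp [hMat]

theorem bc_hMat_lc {A : Type*} [Ring A] (E : A) {m : ℕ} (f p : Fin m → A) (j : Fin m) :
    hMat E f p (Fin.last m) j.castSucc = f j := by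
  simp [hMat]

theorem bc_hMat_ll {A : Type*} [Ring A] (E : A) {m : ℕ} (f p : Fin m → A) :
    hMat E f p (Fin.last m) (Fin.last m) = (∑ k, f k * p k) + E := by
  simp [hMat]

/-- block matrix with one extra row and column -/
def bcBlk {A : Type*} {n : ℕ} (X : Fin n → Fin n → A) (Y Z : Fin n → A) (w : A) :
    Matrix (Fin (n + 1)) (Fin (n + 1)) A :=
  Matrix.of fun i j => Fin.lastCases (Fin.lastCases w Z j) (fun i => Fin.lastCases (Y i) (X i) j) i

theorem bcBlk_cc {A : Type*} {n : ℕ} (X : Fin n → Fin n → A) (Y Z : Fin n → A) (w : A) (i j : Fin n) :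
    bcBlk X Y Z w i.castSucc j.castSucc = X i j := by simp [bcBlk]
theorem bcBlk_cl {A : Type*} {n : ℕ} (X : Fin n → Fin n → A) (Y Z : Fin n → A) (w : A) (i : Fin n) :
    bcBlk X Y Z w i.castSucc (Fin.last n) = Y i := by simp [bcBlk]
theorem bcBlk_lc {A : Type*} {n : ℕ} (X : Fin n → Fin n → A) (Y Z : Fin n → A) (w : A) (j : Fin n) :
    bcBlk X Y Z w (Fin.last n) j.castSucc = Z j := by simp [bcBlk]
theorem bcBlk_ll {A : Type*} {n : ℕ} (X : Fin n → Fin n → A) (Y Z : Fin n → A) (w : A) :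
    bcBlk X Y Z w (Fin.last n) (Fin.last n) = w := by simp [bcBlk]

theorem bc_ext {A : Type*} {n : ℕ} {M N : Matrix (Fin (n + 1)) (Fin (n + 1)) A}
    (h1 : ∀ i j : Fin n, M i.castSucc j.castSucc = N i.castSucc j.castSucc)
    (h2 : ∀ i : Fin n, M i.castSucc (Fin.last n) = N i.castSucc (Fin.last n))
    (h3 : ∀ j : Fin n, M (Fin.last n) j.castSucc = N (Fin.last n) j.castSucc)
    (h4 : M (Fin.last n) (Fin.last n) = N (Fin.last n) (Fin.last n)) : M = N := by
  ext i j
  refine Fin.lastCases ?_ (fun i => ?_) i <;> refine Fin.lastCases ?_ (fun j => ?_) j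
  · exact h4
  · exact h3 j
  · exact h2 i
  · exact h1 i j

theorem bc_one_ne {A : Type*} [Ring A] {n : ℕ} (i j : Fin n) :
    (1 : Matrix (Fin (n + 1)) (Fin (n + 1)) A) i.castSucc j.castSucc
      = (1 : Matrix (Fin n) (Fin n) A) i j := by simp [Matrix.one_apply]
theorem bc_one_cl {A : Type*} [Ring A] {n : ℕ} (i : Fin n) :
    (1 : Matrix (Fin (n + 1)) (Fin (n + 1)) A) i.castSucc (Fin.last n) = 0 := by
  simp [Matrix.one_apply, (Fin.castSucc_lt_last _).ne]
theorem bc_one_lc {A : Type*} [Ring A] {n : ℕ} (i : Fin n) :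
    (1 : Matrix (Fin (n + 1)) (Fin (n + 1)) A) (Fin.last n) i.castSucc = 0 := by
  simp [Matrix.one_apply, (Fin.castSucc_lt_last _).ne']

end BCHelpers

/-- algebraic form of Lemma 3.2, the 'Main' lemma of the paper.
In an `ℕ`-graded graded-commutative `ℚ`-algebra `A` with anticommuting
square-zero degree-`+1` graded derivations `∂ = D` and `∂̄ = Dbar`, let
`E ∈ A₀` be invertible (with inverse `E'`), `f_i, p_i ∈ A₀` (`1 ≤ i ≤ n`,
`r = n + 1 ≥ 2`), let `h` be the special `r × r` matrix `hMat E f p`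
(which is invertible with inverse `hinv`, `det h = E`), let
`Θ = ∂̄(h⁻¹·∂h)` and `U = E⁻¹·∑ᵢ ∂f_i·∂̄p_i`.  Then `U^r = 0` and for every
`λ ∈ ℚ`,
`det(1 + λΘ) = 1 + λ·∂̄(E⁻¹∂E) - λ²·∂̄∂U·∑_{k<r} λ^k U^k
                - λ³·∂̄U·∂U·∑_{k<r} (k+1) λ^k U^k`. -/
theorem bott_chern_main_lemma
    {A : Type*} [Ring A] [Algebra ℚ A]
    (𝒜 : ℕ → Submodule ℚ A) [GradedAlgebra 𝒜]
    (hcomm : ∀ (m m' : ℕ) (x y : A), x ∈ 𝒜 m → y ∈ 𝒜 m' →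
      x * y = ((-1 : ℤ) ^ (m * m')) • (y * x))
    (D Dbar : A →ₗ[ℚ] A)
    (hDdeg : ∀ (m : ℕ) (x : A), x ∈ 𝒜 m → D x ∈ 𝒜 (m + 1))
    (hDbardeg : ∀ (m : ℕ) (x : A), x ∈ 𝒜 m → Dbar x ∈ 𝒜 (m + 1))
    (hDleib : ∀ (m : ℕ) (x y : A), x ∈ 𝒜 m →
      D (x * y) = D x * y + ((-1 : ℤ) ^ m) • (x * D y))
    (hDbarleib : ∀ (m : ℕ) (x y : A), x ∈ 𝒜 m →
      Dbar (x * y) = Dbar x * y + ((-1 : ℤ) ^ m) • (x * Dbar y))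
    (hDD : ∀ x, D (D x) = 0)
    (hDbarDbar : ∀ x, Dbar (Dbar x) = 0)
    (hDDbar : ∀ x, D (Dbar x) + Dbar (D x) = 0)
    (n : ℕ) (hn : 1 ≤ n)
    (E E' : A) (hE : E ∈ 𝒜 0) (hEE' : E * E' = 1) (hE'E : E' * E = 1)
    (f p : Fin n → A) (hf : ∀ i, f i ∈ 𝒜 0) (hp : ∀ i, p i ∈ 𝒜 0)
    (hinv : Matrix (Fin (n + 1)) (Fin (n + 1)) A)
    (hinvl : hinv * hMat E f p = 1) (hinvr : hMat E f p * hinv = 1)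
    (Θ : Matrix (Fin (n + 1)) (Fin (n + 1)) A)
    (hΘ : Θ = ((hinv * (hMat E f p).map ⇑D).map ⇑Dbar))
    (U : A) (hU : U = E' * ∑ i, D (f i) * Dbar (p i)) :
    U ^ (n + 1) = 0 ∧
    ∀ lam : ℚ,
      ndet ((1 : Matrix (Fin (n + 1)) (Fin (n + 1)) A) + lam • Θ)
        = 1 + lam • Dbar (E' * D E)
          - lam ^ 2 • (Dbar (D U) * ∑ k ∈ Finset.range (n + 1), lam ^ k • U ^ k)
          - lam ^ 3 • (Dbar U * D U *
              ∑ k ∈ Finset.range (n + 1), ((k : ℚ) + 1) • (lam ^ k • U ^ k)) := by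
  classical
  -- degree bookkeeping
  have hone0 : (1 : A) ∈ 𝒜 0 := SetLike.GradedOne.one_mem
  have hmul : ∀ {i j : ℕ} {x y : A}, x ∈ 𝒜 i → y ∈ 𝒜 j → x * y ∈ 𝒜 (i + j) :=
    fun hx hy => SetLike.GradedMul.mul_mem hx hy
  have hE'0 : E' ∈ 𝒜 0 := by
    have h1 := DirectSum.coe_decompose_mul_of_left_mem_zero 𝒜 (b := E') (j := 0) hE
    rw [hEE', DirectSum.decompose_of_mem_same 𝒜 hone0] at h1
    have h2 : E' = (DirectSum.decompose 𝒜 E' 0 : A) := by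
      calc E' = E' * 1 := (mul_one _).symm
        _ = _ := by rw [h1, ← mul_assoc, hE'E, one_mul]
    rw [h2]; exact SetLike.coe_mem _
  have hcen : ∀ (k : ℕ) (x : A), x ∈ 𝒜 (2 * k) → x ∈ Subring.center A := by
    intro k x hx
    rw [Subring.mem_center_iff]
    intro g
    refine DirectSum.Decomposition.inductionOn 𝒜 (motive := fun g => g * x = x * g) ?_ ?_ ?_ g
    · simp
    · intro i y
      rw [hcomm _ _ _ _ hx y.2, mul_assoc, pow_mul]; simp
    · intro a b ha hb
      rw [add_mul, mul_add, ha, hb]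
  have hcen0 : ∀ x ∈ 𝒜 0, x ∈ Subring.center A := fun x hx => hcen 0 x hx
  have hcen2 : ∀ x ∈ 𝒜 2, x ∈ Subring.center A := fun x hx => hcen 1 x hx
  have hc0 : ∀ x ∈ 𝒜 0, ∀ y, y * x = x * y := fun x hx => Subring.mem_center_iff.mp (hcen0 x hx)
  have hc2 : ∀ x ∈ 𝒜 2, ∀ y, y * x = x * y := fun x hx => Subring.mem_center_iff.mp (hcen2 x hx)
  have hodd : ∀ {i j : ℕ} {x y : A}, x ∈ 𝒜 (2 * i + 1) → y ∈ 𝒜 (2 * j + 1) → x * y = - (y * x) := by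
    intro i j x y hx hy
    rw [hcomm _ _ _ _ hx hy, Odd.neg_one_pow]
    · simp
    · exact Odd.mul ⟨i, rfl⟩ ⟨j, rfl⟩
  have hodd1 : ∀ {x y : A}, x ∈ 𝒜 1 → y ∈ 𝒜 1 → x * y = - (y * x) := fun hx hy =>
    hodd (i := 0) (j := 0) hx hy
  have hsq : ∀ x ∈ 𝒜 1, x * x = 0 := by
    intro x hx
    have h := hodd1 hx hx
    have h2 : (2 : ℚ) • (x * x) = 0 := by
      rw [two_smul]; nth_rewrite 1 [h]; simp
    simpa using h2
  have hD0 : ∀ x ∈ 𝒜 0, ∀ y, D (x * y) = D x * y + x * D y := by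
    intro x hx y; rw [hDleib 0 x y hx]; simp
  have hD1 : ∀ x ∈ 𝒜 1, ∀ y, D (x * y) = D x * y - x * D y := by
    intro x hx y; rw [hDleib 1 x y hx]; simp [sub_eq_add_neg]
  have hB0 : ∀ x ∈ 𝒜 0, ∀ y, Dbar (x * y) = Dbar x * y + x * Dbar y := by
    intro x hx y; rw [hDbarleib 0 x y hx]; simp
  have hB1 : ∀ x ∈ 𝒜 1, ∀ y, Dbar (x * y) = Dbar x * y - x * Dbar y := by
    intro x hx y; rw [hDbarleib 1 x y hx]; simp [sub_eq_add_neg]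
  have hDone : D 1 = 0 := by
    have := hD0 1 hone0 1
    simpa using this
  have hDE' : D E' = - (E' * D E * E') := by
    have h := hD0 E hE E'
    rw [hEE', hDone] at h
    have h2 : E * D E' = - (D E * E') := by
      rw [eq_neg_iff_add_eq_zero, add_comm]; exact h.symm
    calc D E' = E' * E * D E' := by rw [hE'E, one_mul]
      _ = _ := by rw [mul_assoc, h2]; simp [mul_assoc]
  -- notation
  obtain ⟨α, hα⟩ : ∃ α : Fin n → A, ∀ i, α i = E' * D (f i) := ⟨_, fun _ => rfl⟩
  obtain ⟨q, hq⟩ : ∃ q : Fin n → A, ∀ i, q i = Dbar (p i) := ⟨_, fun _ => rfl⟩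
  obtain ⟨β, hβ⟩ : ∃ β : A, β = E' * D E := ⟨_, rfl⟩
  have hα1 : ∀ i, α i ∈ 𝒜 1 := fun i => by
    rw [hα]; exact hmul hE'0 (hDdeg 0 _ (hf i))
  have hq1 : ∀ i, q i ∈ 𝒜 1 := fun i => by
    rw [hq]; exact hDbardeg 0 _ (hp i)
  have hβ1 : β ∈ 𝒜 1 := by rw [hβ]; exact hmul hE'0 (hDdeg 0 _ hE)
  have hUα : U = ∑ i, α i * q i := by
    rw [hU, Finset.mul_sum]
    exact Finset.sum_congr rfl fun i _ => by rw [hα, hq, mul_assoc]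
  have hU2 : U ∈ 𝒜 2 := by
    rw [hUα]; exact Submodule.sum_mem _ fun i _ => hmul (hα1 i) (hq1 i)
  have hDα : ∀ i, D (α i) = - (β * α i) := by
    intro i
    rw [hα, hD0 _ hE'0, hDD, hDE', hβ]; simp [mul_assoc]
  have hBq : ∀ i, Dbar (q i) = 0 := fun i => by rw [hq, hDbarDbar]
  have hDq : ∀ i, D (q i) = - Dbar (D (p i)) := fun i => by
    rw [hq]; exact eq_neg_of_add_eq_zero_left (hDDbar _)
  have hEα : ∀ i, E * α i = D (f i) := fun i => by rw [hα, ← mul_assoc, hEE', one_mul]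
  have hEβ : E * β = D E := by rw [hβ, ← mul_assoc, hEE', one_mul]
  have hBα2 : ∀ i, Dbar (α i) ∈ 𝒜 2 := fun i => hDbardeg 1 _ (hα1 i)
  have hBDp2 : ∀ i, Dbar (D (p i)) ∈ 𝒜 2 := fun i => hDbardeg 1 _ (hDdeg 0 _ (hp i))
  have hqα2 : ∀ i j, q i * α j ∈ 𝒜 2 := fun i j => hmul (hq1 i) (hα1 j)
  have hαq2 : ∀ i j, α i * q j ∈ 𝒜 2 := fun i j => hmul (hα1 i) (hq1 j)
  have hαq0 : ∀ i, (α i * q i) * (α i * q i) = 0 := by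
    intro i
    rw [mul_assoc, ← mul_assoc (q i), hodd1 (hq1 i) (hα1 i)]
    simp [← mul_assoc, hsq _ (hα1 i)]
  have hnil : U ^ (n + 1) = 0 := by
    rw [hUα]
    exact bc_nilp α q (fun i j => hcen2 _ (hαq2 i j)) hαq0
  refine ⟨hnil, fun lam => ?_⟩
  -- derivatives of U
  have hBU : ∑ i, Dbar (α i) * q i = Dbar U := by
    rw [hUα, map_sum]
    exact Finset.sum_congr rfl fun i _ => by rw [hB1 _ (hα1 i), hBq]; simp
  have hDU : ∑ i, α i * (Dbar (D (p i)) - q i * β) = D U := by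
    rw [hUα, map_sum]
    refine Finset.sum_congr rfl fun i _ => ?_
    rw [hD1 _ (hα1 i), hDα, hDq, mul_sub, ← mul_assoc, ← hc2 _ (hαq2 i i) β]
    simp only [neg_mul, mul_neg, mul_assoc]
    abel
  have hBDU : ∑ i, Dbar (α i) * (Dbar (D (p i)) - q i * β) = Dbar (D U) + Dbar β * U := by
    have h1 : D U = ∑ i, α i * Dbar (D (p i)) - β * U := by
      rw [← hDU, hc2 _ hU2, hUα, Finset.sum_mul, ← Finset.sum_sub_distrib]
      exact Finset.sum_congr rfl fun i _ => by rw [mul_sub, mul_assoc]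
    have h2 : Dbar U * β = - (β * Dbar U) := hodd (i := 1) (j := 0) (hDbardeg 2 _ hU2) hβ1
    have h3 : Dbar (∑ i, α i * Dbar (D (p i))) = ∑ i, Dbar (α i) * Dbar (D (p i)) := by
      rw [map_sum]
      exact Finset.sum_congr rfl fun i _ => by rw [hB1 _ (hα1 i), hDbarDbar]; simp
    have h4 : ∑ i, Dbar (α i) * (Dbar (D (p i)) - q i * β)
        = ∑ i, Dbar (α i) * Dbar (D (p i)) - Dbar U * β := by
      rw [← hBU, Finset.sum_mul, ← Finset.sum_sub_distrib]
      exact Finset.sum_congr rfl fun i _ => by rw [mul_sub, mul_assoc]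
    rw [h4, h2, h1, map_sub, h3, hB1 _ hβ1]
    abel
  -- the connection matrix
  obtain ⟨γ, hγ⟩ : ∃ γ : A, γ = ∑ k, α k * p k + β := ⟨_, rfl⟩
  have hγ1 : γ ∈ 𝒜 1 := by
    rw [hγ]
    exact Submodule.add_mem _ (Submodule.sum_mem _ fun i _ => hmul (hα1 i) (hp i)) hβ1
  have hω : hinv * (hMat E f p).map ⇑D =
      bcBlk (fun i j => - (p i * α j)) (fun i => D (p i) - p i * γ) α γ := by
    have hh : (hMat E f p).map ⇑D = hMat E f p *
        bcBlk (fun i j => - (p i * α j)) (fun i => D (p i) - p i * γ) α γ := by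
      apply bc_ext
      · intro i j
        simp only [Matrix.map_apply, Matrix.mul_apply, Fin.sum_univ_castSucc, bc_hMat_cc, bc_hMat_cl,
          bcBlk_cc, bcBlk_lc, ite_mul, one_mul, zero_mul, Finset.sum_ite_eq, Finset.mem_univ, if_true]
        split_ifs <;> simp [hDone]
      · intro i
        simp only [Matrix.map_apply, Matrix.mul_apply, Fin.sum_univ_castSucc, bc_hMat_cc, bc_hMat_cl,
          bcBlk_cl, bcBlk_ll, ite_mul, one_mul, zero_mul, Finset.sum_ite_eq, Finset.mem_univ, if_true]
        simp
      · intro j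
        simp only [Matrix.map_apply, Matrix.mul_apply, Fin.sum_univ_castSucc, bc_hMat_lc, bc_hMat_ll,
          bcBlk_cc, bcBlk_lc]
        rw [add_mul, hEα, Finset.sum_mul, ← add_assoc, ← Finset.sum_add_distrib]
        simp [mul_assoc]
      · simp only [Matrix.map_apply, Matrix.mul_apply, Fin.sum_univ_castSucc, bc_hMat_lc, bc_hMat_ll,
          bcBlk_cl, bcBlk_ll]
        have hEγ : E * γ = ∑ k, D (f k) * p k + D E := by
          rw [hγ, mul_add, hEβ, Finset.mul_sum]
          simp only [← mul_assoc, hEα]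
        rw [add_mul, hEγ, Finset.sum_mul, ← add_assoc, ← add_assoc, ← Finset.sum_add_distrib,
          ← Finset.sum_add_distrib, map_add, map_sum]
        congr 1
        refine Finset.sum_congr rfl fun i _ => ?_
        rw [hD0 _ (hf i), mul_sub, mul_assoc]; abel
    rw [hh, ← Matrix.mul_assoc, hinvl, Matrix.one_mul]
  have hΘ' : Θ = bcBlk (fun i j => - (q i * α j) - p i * Dbar (α j))
      (fun i => Dbar (D (p i)) - q i * γ - p i * Dbar γ) (fun j => Dbar (α j)) (Dbar γ) := by
    rw [hΘ, hω]
    apply bc_ext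
    · intro i j
      simp only [Matrix.map_apply, bcBlk_cc, map_neg, hB0 _ (hp i), hq]; abel
    · intro i
      simp only [Matrix.map_apply, bcBlk_cl, map_sub, hB0 _ (hp i), hq]; abel
    · intro i
      simp only [Matrix.map_apply, bcBlk_lc]
    · simp only [Matrix.map_apply, bcBlk_ll]
  have hBγ : Dbar γ = ∑ j, Dbar (α j) * p j + (Dbar β - U) := by
    rw [hγ, map_add, map_sum, hUα]
    simp only [fun i => hB1 _ (hα1 i), Finset.sum_sub_distrib, ← hq]
    abel
  obtain ⟨N, hN⟩ : ∃ N : Matrix (Fin (n + 1)) (Fin (n + 1)) A,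
    N = bcBlk (fun i j => - (q i * α j)) (fun i => Dbar (D (p i)) - q i * β)
      (fun j => Dbar (α j)) (Dbar β - U) := ⟨_, rfl⟩
  have hblkc : ∀ (X : Fin n → Fin n → A) (Y Z : Fin n → A) (w : A),
      (∀ i j, X i j ∈ Subring.center A) → (∀ i, Y i ∈ Subring.center A) →
      (∀ i, Z i ∈ Subring.center A) → w ∈ Subring.center A →
      ∀ i j, bcBlk X Y Z w i j ∈ Subring.center A := by
    intro X Y Z w hX hY hZ hw i j
    refine Fin.lastCases ?_ (fun i => ?_) i <;> refine Fin.lastCases ?_ (fun j => ?_) j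
    · rw [bcBlk_ll]; exact hw
    · rw [bcBlk_lc]; exact hZ j
    · rw [bcBlk_cl]; exact hY i
    · rw [bcBlk_cc]; exact hX i j
  have honec : ∀ {m : ℕ} (i j : Fin m), (1 : Matrix (Fin m) (Fin m) A) i j ∈ Subring.center A := by
    intro m i j
    rw [Matrix.one_apply]; split_ifs
    · exact one_mem _
    · exact zero_mem _
  have hsmulc : ∀ (x : A), x ∈ Subring.center A → lam • x ∈ Subring.center A := by
    intro x hx
    rw [Subring.mem_center_iff] at hx ⊢
    intro g; rw [mul_smul_comm, smul_mul_assoc, hx]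
  have hBβ2 : Dbar β ∈ 𝒜 2 := hDbardeg 1 _ hβ1
  have hNc : ∀ i j, N i j ∈ Subring.center A := by
    rw [hN]
    refine hblkc _ _ _ _ (fun i j => neg_mem (hcen2 _ (hqα2 i j)))
      (fun i => sub_mem (hcen2 _ (hBDp2 i)) (hcen2 _ (hmul (hq1 i) hβ1)))
      (fun i => hcen2 _ (hBα2 i)) (sub_mem (hcen2 _ hBβ2) (hcen2 _ hU2))
  have hΘc : ∀ i j, Θ i j ∈ Subring.center A := by
    rw [hΘ']
    refine hblkc _ _ _ _ (fun i j => sub_mem (neg_mem (hcen2 _ (hqα2 i j)))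
        (mul_mem (hcen0 _ (hp i)) (hcen2 _ (hBα2 j))))
      (fun i => sub_mem (sub_mem (hcen2 _ (hBDp2 i)) (hcen2 _ (hmul (hq1 i) hγ1)))
        (mul_mem (hcen0 _ (hp i)) (hcen2 _ (hDbardeg 1 _ hγ1))))
      (fun i => hcen2 _ (hBα2 i)) (hcen2 _ (hDbardeg 1 _ hγ1))
  have hconj : ndet ((1 : Matrix (Fin (n + 1)) (Fin (n + 1)) A) + lam • Θ) = ndet (1 + lam • N) := by
    refine bc_conj (bcBlk (fun i j => (1 : Matrix (Fin n) (Fin n) A) i j) p (fun _ => 0) 1)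
      (bcBlk (fun i j => (1 : Matrix (Fin n) (Fin n) A) i j) (fun i => - p i) (fun _ => 0) 1) _ _
      (hblkc _ _ _ _ (fun i j => honec i j) (fun i => hcen0 _ (hp i)) (fun _ => zero_mem _) (one_mem _))
      (hblkc _ _ _ _ (fun i j => honec i j) (fun i => neg_mem (hcen0 _ (hp i))) (fun _ => zero_mem _)
        (one_mem _))
      (fun i j => add_mem (honec i j) (hsmulc _ (hΘc i j)))
      (fun i j => add_mem (honec i j) (hsmulc _ (hNc i j))) ?_ ?_
    · apply bc_ext <;> intros <;>
        simp [Matrix.mul_apply, Fin.sum_univ_castSucc, bcBlk_cc, bcBlk_cl, bcBlk_lc, bcBlk_ll,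
          Matrix.one_apply, (Fin.castSucc_lt_last _).ne, (Fin.castSucc_lt_last _).ne']
    · rw [mul_add, add_mul, mul_one, one_mul, Matrix.mul_smul, Matrix.smul_mul]
      congr 2
      rw [hΘ', hN]
      apply bc_ext
      · intro i j
        simp [Matrix.mul_apply, Fin.sum_univ_castSucc, bcBlk_cc, bcBlk_cl, bcBlk_lc, bcBlk_ll,
          Matrix.one_apply]
      · intro i
        simp only [Matrix.mul_apply, Fin.sum_univ_castSucc, bcBlk_cc, bcBlk_cl, bcBlk_lc, bcBlk_ll,
          Matrix.one_apply, ite_mul, one_mul, zero_mul, Finset.sum_ite_eq, Finset.mem_univ, if_true, mul_one]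
        rw [hγ, mul_add, Finset.mul_sum]
        simp only [neg_mul, Finset.sum_neg_distrib, mul_assoc]
        abel
      · intro j
        simp [Matrix.mul_apply, Fin.sum_univ_castSucc, bcBlk_cc, bcBlk_cl, bcBlk_lc, bcBlk_ll,
          Matrix.one_apply]
      · simp only [Matrix.mul_apply, Fin.sum_univ_castSucc, bcBlk_cc, bcBlk_cl, bcBlk_lc, bcBlk_ll,
          zero_mul, Finset.sum_const_zero, one_mul, mul_one, zero_add]
        exact hBγ
  -- the determinant of the odd rank one part
  obtain ⟨a, ha⟩ : ∃ a : Fin n → A, ∀ i, a i = lam • α i := ⟨_, fun _ => rfl⟩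
  have ha1 : ∀ i, a i ∈ 𝒜 1 := fun i => by rw [ha]; exact Submodule.smul_mem _ _ (hα1 i)
  have hau : ∑ i, a i * q i = lam • U := by
    rw [hUα, Finset.smul_sum]
    exact Finset.sum_congr rfl fun i _ => by rw [ha, smul_mul_assoc]
  obtain ⟨c, hcc, hcu, hcd⟩ := bc_odd_det a q (fun i j => hcen2 _ (hmul (ha1 i) (hq1 j)))
    (fun i => by rw [ha, smul_mul_assoc, smul_mul_assoc, mul_smul_comm, hαq0]; simp)
    (fun i j => hodd1 (hq1 i) (ha1 j))
  have hcx := Subring.mem_center_iff.mp hcc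
  have hsub : ((1 : Matrix (Fin (n + 1)) (Fin (n + 1)) A) + lam • N).submatrix Fin.castSucc Fin.castSucc
      = 1 - Matrix.of fun i j => q i * a j := by
    ext i j
    simp [hN, bcBlk_cc, ha, bc_one_ne, sub_eq_add_neg]
  have hW := bc_WW a q c hcc hcu
  have hdet := bc_schur (1 + lam • N) (fun i j => add_mem (honec i j) (hsmulc _ (hNc i j)))
    (1 + Matrix.of fun i j => c * (q i * a j))
    (fun i j => add_mem (honec i j) (mul_mem hcc (hcen2 _ (hmul (hq1 i) (ha1 j)))))
    (by rw [hsub]; exact hW)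
  rw [hsub, hcd, bc_sumW _ _ _ _ _ hcc] at hdet
  simp only [Matrix.add_apply, Matrix.smul_apply, bc_one_cl, bc_one_lc, Matrix.one_apply_eq, hN,
    bcBlk_cl, bcBlk_lc, bcBlk_ll, zero_add, ha, smul_mul_assoc, mul_smul_comm, smul_smul,
    ← Finset.smul_sum, hBDU, hBU, hDU] at hdet
  rw [hau] at hcu
  rw [hconj, hN, hdet]
  -- final algebra
  have hlk : ∀ k : ℕ, lam ^ k • U ^ k = (lam • U) ^ k := fun k => (smul_pow _ _ _).symm
  simp only [hlk]
  have hnil' : (lam • U) ^ (n + 1) = 0 := by rw [smul_pow, hnil, smul_zero]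
  have hg1 : ∑ k ∈ Finset.range (n + 1), (lam • U) ^ k = c := by
    have h := mul_neg_geom_sum (lam • U) (n + 1)
    rw [hnil', sub_zero] at h
    calc _ = (c * (1 - lam • U)) * ∑ k ∈ Finset.range (n + 1), (lam • U) ^ k := by rw [hcu, one_mul]
      _ = c := by rw [mul_assoc, h, mul_one]
  have hg2 : ∑ k ∈ Finset.range (n + 1), ((k : ℚ) + 1) • (lam • U) ^ k = c * c := by
    have h := bc_geom (lam • U) (n + 1)
    rw [hnil', smul_zero, sub_zero, hg1] at h
    calc _ = (c * (1 - lam • U)) * ∑ k ∈ Finset.range (n + 1), ((k : ℚ) + 1) • (lam • U) ^ k := by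
          rw [hcu, one_mul]
      _ = _ := by rw [mul_assoc, h]
  have hcc2 : Dbar U * D U * (c * c) = c * (c * (Dbar U * D U)) := by
    rw [← mul_assoc, hcx, hcx]
  rw [hg1, hg2, hcx (Dbar (D U)), hcc2, ← hβ]
  have hcU : lam • (c * U) = c - 1 := by
    rw [mul_sub, mul_one, mul_smul_comm] at hcu
    rw [← hcu]; abel
  have hcβ : lam • (c * (Dbar β * U)) = c * Dbar β - Dbar β := by
    rw [hc2 _ hU2, ← mul_assoc, ← smul_mul_assoc, hcU, sub_mul, one_mul]
  simp only [mul_add, mul_sub, mul_one, mul_smul_comm, smul_add, smul_sub, mul_assoc]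
  have e1 : (lam * lam) • (c * (Dbar β * U)) = lam • (c * Dbar β) - lam • Dbar β := by
    rw [mul_smul, hcβ, smul_sub]
  rw [e1, hcU]
  module
end

section
/- In the graded setting described in the context, let E ∈ A₀ be invertible, let f, p ∈ A₀, let h be the 2×2 matrix over A₀ with rows (1, p) and (f, f·p + E), and set Θ = ∂̄(h^{−1}·∂h), a 2×2 matrix with entries in A₂. Then trace(Θ·Θ) − (∂̄(E^{−1}·∂E))² = 2·∂̄(∂(E^{−1}·∂f·∂̄p)). -/
set_option linter.unusedSimpArgs false
set_option linter.unusedVariables false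

theorem bc_left_comm {A : Type*} [Ring A] {x y : A} (h : x * y = y * x) (z : A) :
    x * (y * z) = y * (x * z) := by
  rw [← mul_assoc, h, mul_assoc]

theorem bc_left_anti {A : Type*} [Ring A] {x y : A} (h : x * y = -(y * x)) (z : A) :
    x * (y * z) = -(y * (x * z)) := by
  rw [← mul_assoc, h, neg_mul, mul_assoc]

theorem bc_left_zero {A : Type*} [Ring A] {x y : A} (h : x * y = 0) (z : A) :
    x * (y * z) = 0 := by
  rw [← mul_assoc, h, zero_mul]

/-- The purely algebraic part: `p` has degree 0, `s, t, r` degree 2, `b, a, q` degree 1. -/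
theorem bc_core {A : Type*} [Ring A] (p s t r b a q : A)
    (hsp : s * p = p * s) (htp : t * p = p * t) (hrp : r * p = p * r)
    (hbp : b * p = p * b) (hap : a * p = p * a) (hqp : q * p = p * q)
    (hts : t * s = s * t) (hrs : r * s = s * r)
    (hbs : b * s = s * b) (has : a * s = s * a) (hqs : q * s = s * q)
    (hbt : b * t = t * b) (hat : a * t = t * a) (hqt : q * t = t * q)
    (hab : a * b = -(b * a)) (hqb : q * b = -(b * q)) (hqa : q * a = -(a * q))
    (haa : a * a = 0) (hqq : q * q = 0) :
    (-(q * a + p * s)) * (-(q * a + p * s))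
      + (r - (q * (a * p + b) + p * (s * p - a * q + t))) * s
      + (s * (r - (q * (a * p + b) + p * (s * p - a * q + t)))
      + (s * p - a * q + t) * (s * p - a * q + t)) - t ^ 2
      = 2 * (-(t * (a * q)) + b * (s * q) + s * r) := by
  simp only [pow_two, two_mul, mul_add, add_mul, mul_sub, sub_mul, neg_mul, mul_neg, neg_neg, mul_assoc,
    hsp, htp, hrp, hbp, hap, hqp, hts, hrs, hbs, has, hqs, hbt, hat, hqt, hab, hqb, hqa, haa, hqq,
    bc_left_comm hsp, bc_left_comm htp, bc_left_comm hrp, bc_left_comm hbp, bc_left_comm hap,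
    bc_left_comm hqp, bc_left_comm hts, bc_left_comm hrs, bc_left_comm hbs, bc_left_comm has,
    bc_left_comm hqs, bc_left_comm hbt, bc_left_comm hat, bc_left_comm hqt,
    bc_left_anti hab, bc_left_anti hqb, bc_left_anti hqa, bc_left_zero haa, bc_left_zero hqq,
    mul_zero, neg_zero]
  abel

/-- the rank-2 identity of Remark 3.4 of the paper.
In an `ℕ`-graded graded-commutative `ℚ`-algebra `A` with anticommuting
square-zero degree-`+1` graded derivations `∂ = D` and `∂̄ = Dbar`, let
`E ∈ A₀` be invertible (with inverse `E'`), `f, p ∈ A₀`, let `h` be the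
`2 × 2` matrix with rows `(1, p)` and `(f, f·p + E)` (invertible with
inverse `hinv`), and `Θ = ∂̄(h⁻¹·∂h)`.  Then
`trace(Θ·Θ) - (∂̄(E⁻¹·∂E))² = 2·∂̄(∂(E⁻¹·∂f·∂̄p))`. -/
theorem bott_chern_rank_two_identity
    {A : Type*} [Ring A] [Algebra ℚ A]
    (𝒜 : ℕ → Submodule ℚ A) [GradedAlgebra 𝒜]
    (hcomm : ∀ (m m' : ℕ) (x y : A), x ∈ 𝒜 m → y ∈ 𝒜 m' →
      x * y = ((-1 : ℤ) ^ (m * m')) • (y * x))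
    (D Dbar : A →ₗ[ℚ] A)
    (hDdeg : ∀ (m : ℕ) (x : A), x ∈ 𝒜 m → D x ∈ 𝒜 (m + 1))
    (hDbardeg : ∀ (m : ℕ) (x : A), x ∈ 𝒜 m → Dbar x ∈ 𝒜 (m + 1))
    (hDleib : ∀ (m : ℕ) (x y : A), x ∈ 𝒜 m →
      D (x * y) = D x * y + ((-1 : ℤ) ^ m) • (x * D y))
    (hDbarleib : ∀ (m : ℕ) (x y : A), x ∈ 𝒜 m →
      Dbar (x * y) = Dbar x * y + ((-1 : ℤ) ^ m) • (x * Dbar y))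
    (hDD : ∀ x, D (D x) = 0)
    (hDbarDbar : ∀ x, Dbar (Dbar x) = 0)
    (hDDbar : ∀ x, D (Dbar x) + Dbar (D x) = 0)
    (E E' : A) (hE : E ∈ 𝒜 0) (hEE' : E * E' = 1) (hE'E : E' * E = 1)
    (f p : A) (hf : f ∈ 𝒜 0) (hp : p ∈ 𝒜 0)
    (h : Matrix (Fin 2) (Fin 2) A)
    (hmat : h = Matrix.of ![![1, p], ![f, f * p + E]])
    (hinv : Matrix (Fin 2) (Fin 2) A)
    (hinvl : hinv * h = 1) (hinvr : h * hinv = 1)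
    (Θ : Matrix (Fin 2) (Fin 2) A)
    (hΘ : Θ = (hinv * h.map ⇑D).map ⇑Dbar) :
    Matrix.trace (Θ * Θ) - (Dbar (E' * D E)) ^ 2
      = 2 * Dbar (D (E' * D f * Dbar p)) := by
  have c0 : ∀ (m : ℕ) (x y : A), x ∈ 𝒜 0 → y ∈ 𝒜 m → y * x = x * y := by
    intro m x y hx hy
    simpa using hcomm m 0 y x hy hx
  have c2 : ∀ (m : ℕ) (x y : A), x ∈ 𝒜 2 → y ∈ 𝒜 m → y * x = x * y := by
    intro m x y hx hy
    simpa [pow_mul'] using hcomm m 2 y x hy hx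
  have c1 : ∀ (x y : A), x ∈ 𝒜 1 → y ∈ 𝒜 1 → y * x = -(x * y) := by
    intro x y hx hy
    simpa using hcomm 1 1 y x hy hx
  have c11 : ∀ (x : A), x ∈ 𝒜 1 → x * x = 0 := by
    intro x hx
    have h2 : (2 : ℚ) • (x * x) = 0 := by
      rw [two_smul]
      exact add_eq_zero_iff_eq_neg.mpr (c1 x x hx hx)
    have h3 : x * x = (2⁻¹ : ℚ) • ((2 : ℚ) • (x * x)) := by
      rw [smul_smul]
      norm_num
    rw [h3, h2, smul_zero]
  have L0 : ∀ x y : A, x ∈ 𝒜 0 → D (x * y) = D x * y + x * D y := by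
    intro x y hx
    simpa using hDleib 0 x y hx
  have L1 : ∀ x y : A, x ∈ 𝒜 1 → D (x * y) = D x * y - x * D y := by
    intro x y hx
    simpa [sub_eq_add_neg] using hDleib 1 x y hx
  have B0 : ∀ x y : A, x ∈ 𝒜 0 → Dbar (x * y) = Dbar x * y + x * Dbar y := by
    intro x y hx
    simpa using hDbarleib 0 x y hx
  have B1 : ∀ x y : A, x ∈ 𝒜 1 → Dbar (x * y) = Dbar x * y - x * Dbar y := by
    intro x y hx
    simpa [sub_eq_add_neg] using hDbarleib 1 x y hx
  have h1 : (1 : A) ∈ 𝒜 0 := SetLike.GradedOne.one_mem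
  have D1 : D 1 = 0 := by
    have := L0 1 1 h1
    simpa using this
  have hE' : E' ∈ 𝒜 0 := by
    have e1 : E * (DirectSum.decompose 𝒜 E' 0 : A) = 1 := by
      rw [← zero_add 0, ← DirectSum.coe_decompose_mul_add_of_left_mem 𝒜 hE, hEE',
        zero_add, DirectSum.decompose_of_mem_same 𝒜 h1]
    rw [left_inv_eq_right_inv hE'E e1]
    exact SetLike.coe_mem _
  have mm : ∀ (i j : ℕ) (x y : A), x ∈ 𝒜 i → y ∈ 𝒜 j → x * y ∈ 𝒜 (i + j) :=
    fun i j x y hx hy => SetLike.GradedMul.mul_mem hx hy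
  have hDp := hDdeg 0 p hp
  have hDf := hDdeg 0 f hf
  have hDE := hDdeg 0 E hE
  have hq := hDbardeg 0 p hp
  have ha : E' * D f ∈ 𝒜 1 := mm 0 1 _ _ hE' hDf
  have hb : E' * D E ∈ 𝒜 1 := mm 0 1 _ _ hE' hDE
  have hs := hDbardeg 1 _ ha
  have ht := hDbardeg 1 _ hb
  have hr := hDbardeg 1 _ hDp
  -- the derivative of the inverse
  have hDE' : D E' = -(E' * D E * E') := by
    have h2 := L0 E' E hE'
    rw [hE'E, D1] at h2
    have h3 : D E' * E = -(E' * D E) := eq_neg_of_add_eq_zero_left h2.symm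
    calc D E' = D E' * E * E' := by rw [mul_assoc, hEE', mul_one]
      _ = _ := by rw [h3, neg_mul]
  have hDa : D (E' * D f) = -((E' * D E) * (E' * D f)) := by
    rw [L0 _ _ hE', hDD, hDE']
    noncomm_ring
  -- the inverse matrix
  have hk : hinv = Matrix.of ![![1 + p * E' * f, -(p * E')], ![-(E' * f), E']] := by
    refine left_inv_eq_right_inv hinvl ?_
    rw [hmat]
    have e1 : f * p = p * f := c0 0 p f hp hf
    have e2 : E * p = p * E := c0 0 p E hp hE
    have e3 : E' * p = p * E' := c0 0 p E' hp hE'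
    have e4 : f * E' = E' * f := c0 0 E' f hE' hf
    ext i j
    fin_cases i <;> fin_cases j <;>
      simp [Matrix.mul_apply, Fin.sum_univ_two, mul_add, add_mul, mul_assoc, bc_left_comm e1,
        bc_left_comm e2, e1, e2, e3, e4, hEE', bc_left_comm e4, ← mul_assoc E E', ← mul_assoc E' E]
    abel
  have M11 : (hinv * h.map ⇑D) 0 0 = -(p * (E' * D f)) := by
    rw [hk, hmat]
    simp [Matrix.mul_apply, Fin.sum_univ_two, D1, mul_assoc]
  have M21 : (hinv * h.map ⇑D) 1 0 = E' * D f := by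
    rw [hk, hmat]
    simp [Matrix.mul_apply, Fin.sum_univ_two, D1, mul_assoc]
  have M22 : (hinv * h.map ⇑D) 1 1 = (E' * D f) * p + E' * D E := by
    rw [hk, hmat]
    simp [Matrix.mul_apply, Fin.sum_univ_two, L0 f p hf, mul_assoc, mul_add]
    abel
  have M12 : (hinv * h.map ⇑D) 0 1 = D p - p * ((E' * D f) * p + E' * D E) := by
    rw [hk, hmat]
    simp [Matrix.mul_apply, Fin.sum_univ_two, L0 f p hf, mul_assoc, mul_add, add_mul]
    abel
  have T11 : Θ 0 0 = -(Dbar p * (E' * D f) + p * Dbar (E' * D f)) := by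
    rw [hΘ, Matrix.map_apply, M11, map_neg, B0 _ _ hp]
  have T21 : Θ 1 0 = Dbar (E' * D f) := by
    rw [hΘ, Matrix.map_apply, M21]
  have T22 : Θ 1 1 = Dbar (E' * D f) * p - (E' * D f) * Dbar p + Dbar (E' * D E) := by
    rw [hΘ, Matrix.map_apply, M22, map_add, B1 _ _ ha]
  have T12 : Θ 0 1 = Dbar (D p) - (Dbar p * ((E' * D f) * p + E' * D E)
      + p * (Dbar (E' * D f) * p - (E' * D f) * Dbar p + Dbar (E' * D E))) := by
    rw [hΘ, Matrix.map_apply, M12, map_sub, B0 _ _ hp, map_add, B1 _ _ ha]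
  have hR : Dbar (D (E' * D f * Dbar p)) = -(Dbar (E' * D E) * ((E' * D f) * Dbar p))
      + (E' * D E) * (Dbar (E' * D f) * Dbar p) + Dbar (E' * D f) * Dbar (D p) := by
    have e : D (Dbar p) = -Dbar (D p) := eq_neg_of_add_eq_zero_left (hDDbar p)
    rw [L1 _ _ ha, hDa, e, map_sub, neg_mul, map_neg, mul_assoc, B1 _ _ hb, B1 _ _ ha, mul_neg,
      map_neg, B1 _ _ ha, hDbarDbar, hDbarDbar]
    simp only [mul_zero, sub_zero]
    noncomm_ring
  rw [hR, Matrix.trace_fin_two, Matrix.mul_apply, Matrix.mul_apply, Fin.sum_univ_two,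
    Fin.sum_univ_two, T11, T21, T22, T12]
  exact bc_core p _ _ _ _ _ _ (c0 _ _ _ hp hs) (c0 _ _ _ hp ht) (c0 _ _ _ hp hr) (c0 _ _ _ hp hb)
    (c0 _ _ _ hp ha) (c0 _ _ _ hp hq) (c2 _ _ _ hs ht) (c2 _ _ _ hs hr) (c2 _ _ _ hs hb)
    (c2 _ _ _ hs ha) (c2 _ _ _ hs hq) (c2 _ _ _ ht hb) (c2 _ _ _ ht ha) (c2 _ _ _ ht hq)
    (c1 _ _ hb ha) (c1 _ _ hb hq) (c1 _ _ ha hq) (c11 _ ha) (c11 _ hq)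
end
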